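/- arXiv:2002.08109 — 2 statements merged into one kernel-verified Lean document; each statement's English description precedes it below -/
import Mathlib

section
/- Let φ_1, …, φ_n be 2×2 complex matrices with trace zero that pairwise commute. Then there exist a complex number c and complex numbers λ_1, …, λ_n such that for all z = (z_1, …, z_n) ∈ ℂⁿ one has det( Σ_{j=1}^n z_j·φ_j ) = c·( Σ_{j=1}^n λ_j·z_j )². In other words, the quadratic form z ↦ det(Σ z_j φ_j) has rank at most 1. -/
open Matrix

/-!
The centralizer of a nonzero element of `sl₂(ℂ)` is the line it spans. Hence either all `φ j` vanish,
or, for some `φ k ≠ 0`, every `φ j` equals `lam j • φ k`; then `∑ z j • φ j` is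
`(∑ lam j * z j) • φ k`, whose determinant is `det (φ k) * (∑ lam j * z j) ^ 2`.
-/

/-- The centralizer in `sl₂(ℂ)` of a nonzero element is the line spanned by that element. -/
lemma exists_eq_smul_of_commute_traceless {A B : Matrix (Fin 2) (Fin 2) ℂ}
    (hA : A.trace = 0) (hB : B.trace = 0) (hAB : A * B = B * A) (hne : A ≠ 0) :
    ∃ t : ℂ, B = t • A := by
  rw [Matrix.trace_fin_two] at hA hB
  have hA' : A 1 1 = -A 0 0 := by linear_combination hA
  have hB' : B 1 1 = -B 0 0 := by linear_combination hB
  have h00 := congrFun (congrFun hAB 0) 0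
  have h01 := congrFun (congrFun hAB 0) 1
  have h10 := congrFun (congrFun hAB 1) 0
  simp only [Matrix.mul_apply, Fin.sum_univ_two, hA', hB'] at h00 h01 h10
  -- Commutation says that the coordinate vectors of `A` and `B` in `sl₂` have vanishing `2 × 2` minors.
  have e1 : A 0 1 * B 1 0 = B 0 1 * A 1 0 := by linear_combination h00
  have e2 : A 0 0 * B 0 1 = B 0 0 * A 0 1 := by linear_combination h01 / 2
  have e3 : A 0 0 * B 1 0 = B 0 0 * A 1 0 := by linear_combination -h10 / 2
  have key : ∀ t : ℂ, B 0 0 = t * A 0 0 → B 0 1 = t * A 0 1 → B 1 0 = t * A 1 0 → B = t • A := by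
    intro t h1 h2 h3
    ext i j
    fin_cases i <;> fin_cases j <;> simp [h1, h2, h3, hA', hB']
  by_cases ha : A 0 0 = 0
  · by_cases hb : A 0 1 = 0
    · have hc : A 1 0 ≠ 0 := by
        intro hc
        apply hne
        ext i j
        fin_cases i <;> fin_cases j <;> simp [ha, hb, hc, hA']
      refine ⟨B 1 0 / A 1 0, key _ ?_ ?_ ?_⟩ <;> field_simp
      · linear_combination -e3
      · linear_combination -e1
    · refine ⟨B 0 1 / A 0 1, key _ ?_ ?_ ?_⟩ <;> field_simp
      · linear_combination -e2
      · linear_combination e1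
  · refine ⟨B 0 0 / A 0 0, key _ ?_ ?_ ?_⟩ <;> field_simp
    · linear_combination e2
    · linear_combination e3

/-- If `φ_1, …, φ_n` are pairwise commuting trace-free `2 × 2` complex matrices,
then the quadratic form `z ↦ det (Σ_j z_j • φ_j)` on `ℂⁿ` has rank at most one:
it is of the form `c (Σ_j λ_j z_j)²`. -/
theorem det_of_commuting_traceless_is_rank_one_square
    {n : ℕ} (φ : Fin n → Matrix (Fin 2) (Fin 2) ℂ)
    (htr : ∀ i, Matrix.trace (φ i) = 0)
    (hcomm : ∀ i j, φ i * φ j = φ j * φ i) :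
    ∃ c : ℂ, ∃ lam : Fin n → ℂ, ∀ z : Fin n → ℂ,
      Matrix.det (∑ j, z j • φ j) = c * (∑ j, lam j * z j) ^ 2 := by
  by_cases h : ∀ k, φ k = 0
  · exact ⟨0, 0, fun z => by simp [h]⟩
  · push Not at h
    obtain ⟨k, hk⟩ := h
    choose lam hlam using fun j =>
      exists_eq_smul_of_commute_traceless (htr k) (htr j) (hcomm k j) hk
    refine ⟨(φ k).det, lam, fun z => ?_⟩
    have hsum : ∑ j, z j • φ j = (∑ j, lam j * z j) • φ k := by
      rw [Finset.sum_smul]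
      refine Finset.sum_congr rfl fun j _ => ?_
      rw [mul_comm, mul_smul, ← hlam j]
    rw [hsum, Matrix.det_smul, Fintype.card_fin, mul_comm]
end

section
/- (Ahlfors-type decay lemma) Let m ≥ 1 be an integer and let R > 0, d > 0, C₁ ≥ 0 be real numbers. Let f be a real-valued function on ℝᵐ that is twice continuously differentiable on the closed ball B̄_R of radius R centered at the origin, and suppose that on B̄_R one has 0 ≤ f ≤ C₁ and Σ_{i=1}^m ∂²f/∂x_i²(x) ≥ d²·f(x). Set C₂ := min{ d/(4m), 1/(4R) }. Then for every x ∈ B̄_R, f(x) ≤ C₁·exp( −C₂·d·(R² − |x|²) ). -/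
/-!
The comparison function `g x = C₁ exp (-a (R² - |x|²))`, with `a = C₂ d`, satisfies
`∑ ∂²g/∂x_i² = (2 a m + 4 a² |x|²) g ≤ (3/4) d² g` on the ball and equals `C₁` on the sphere.
If `f - g` were positive somewhere, it would attain a positive maximum at an interior point,
where `∑ ∂²(f - g)/∂x_i² ≥ d² (f - g) > 0`; this contradicts the second derivative test applied
along each coordinate line (`deriv_two_nonpos_of_isLocalMax`).
-/

open Metric

/-- Necessary second-order condition at a local maximum on the line. If the second derivative
were positive the point would also be a local minimum, making the function locally constant. -/
lemma deriv_two_nonpos_of_isLocalMax {φ φ' : ℝ → ℝ} {c t : ℝ}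
    (h1 : ∀ᶠ s in nhds t, HasDerivAt φ (φ' s) s) (h2 : HasDerivAt φ' c t)
    (hmax : IsLocalMax φ t) : c ≤ 0 := by
  by_contra! hc
  have hd : deriv φ =ᶠ[nhds t] φ' := h1.mono fun s hs => hs.deriv
  have hdd : deriv (deriv φ) t = c := by rw [hd.deriv_eq, h2.deriv]
  have hmin : IsLocalMin φ t :=
    isLocalMin_of_deriv_deriv_pos (by rw [hdd]; exact hc) hmax.deriv_eq_zero
      h1.self_of_nhds.continuousAt
  have hconst : φ =ᶠ[nhds t] fun _ => φ t := by
    filter_upwards [hmax, hmin] with s hs hs'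
    exact le_antisymm hs hs'
  have h0 : deriv φ =ᶠ[nhds t] fun _ => 0 := by
    simpa using hconst.deriv
  rw [h0.deriv_eq, deriv_const] at hdd
  exact hc.ne hdd

/-- First and second derivatives of a `C²` function along a line. -/
lemma hasDerivAt_line_two {E : Type*} [NormedAddCommGroup E] [NormedSpace ℝ E]
    {f : E → ℝ} {x : E} (v : E) (hf : ContDiffAt ℝ 2 f x) :
    (∀ᶠ s in nhds (0 : ℝ),
      HasDerivAt (fun t : ℝ => f (x + t • v)) (fderiv ℝ f (x + s • v) v) s) ∧
    HasDerivAt (fun s : ℝ => fderiv ℝ f (x + s • v) v) (iteratedFDeriv ℝ 2 f x ![v, v]) 0 := by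
  have hline : ∀ s : ℝ, HasDerivAt (fun t : ℝ => x + t • v) v s := fun s => by
    simpa using ((hasDerivAt_id s).smul_const v).const_add x
  have hx0 : x + (0 : ℝ) • v = x := by simp
  constructor
  · have hev : ∀ᶠ y in nhds x, ContDiffAt ℝ 2 f y := hf.eventually (by simp)
    have hcont : Filter.Tendsto (fun t : ℝ => x + t • v) (nhds 0) (nhds x) := by
      simpa [hx0] using (hline 0).continuousAt.tendsto
    filter_upwards [hcont.eventually hev] with s hs
    exact (hs.differentiableAt (by simp)).hasFDerivAt.comp_hasDerivAt s (hline s)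
  · have hD : DifferentiableAt ℝ (fderiv ℝ f) x :=
      (hf.fderiv_right (m := 1) (by norm_num)).differentiableAt (by simp)
    have hD' : HasFDerivAt (fderiv ℝ f) (fderiv ℝ (fderiv ℝ f) x) (x + (0 : ℝ) • v) := by
      rw [hx0]; exact hD.hasFDerivAt
    have h : HasDerivAt (fun s : ℝ => fderiv ℝ f (x + s • v)) (fderiv ℝ (fderiv ℝ f) x v) 0 :=
      hD'.comp_hasDerivAt (0 : ℝ) (hline 0)
    refine (h.clm_apply (hasDerivAt_const (0 : ℝ) v)).congr_deriv ?_
    simp [iteratedFDeriv_two_apply]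

/-- First derivative of the comparison function along a coordinate line; `p` is the coordinate
and `r` the squared norm of the base point. -/
lemma hasDerivAt_comparison (C a R p r s : ℝ) :
    HasDerivAt (fun t : ℝ => C * Real.exp (-(a * (R ^ 2 - (r + 2 * t * p + t ^ 2)))))
      (C * Real.exp (-(a * (R ^ 2 - (r + 2 * s * p + s ^ 2)))) * (a * (2 * p + 2 * s))) s := by
  have h : HasDerivAt (fun t : ℝ => -(a * (R ^ 2 - (r + 2 * t * p + t ^ 2))))
      (a * (2 * p + 2 * s)) s := by
    have h1 : HasDerivAt (fun t : ℝ => r + 2 * t * p + t ^ 2) (2 * p + 2 * s) s := by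
      have := (((hasDerivAt_id s).const_mul 2).mul_const p).const_add r |>.add (hasDerivAt_pow 2 s)
      exact this.congr_deriv (by norm_num)
    exact ((h1.const_sub (R ^ 2)).const_mul a).neg.congr_deriv (by ring)
  exact ((h.exp).const_mul C).congr_deriv (by ring)

lemma hasDerivAt_comparison_two (C a R p r : ℝ) :
    HasDerivAt (fun s : ℝ =>
      C * Real.exp (-(a * (R ^ 2 - (r + 2 * s * p + s ^ 2)))) * (a * (2 * p + 2 * s)))
      (C * Real.exp (-(a * (R ^ 2 - r))) * (4 * a ^ 2 * p ^ 2 + 2 * a)) 0 := by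
  have h2 : HasDerivAt (fun s : ℝ => a * (2 * p + 2 * s)) (a * 2) 0 := by
    simpa using (((hasDerivAt_id (0 : ℝ)).const_mul 2).const_add (2 * p)).const_mul a
  refine ((hasDerivAt_comparison C a R p r 0).mul h2).congr_deriv ?_
  norm_num
  ring

/-- Ahlfors-type decay lemma.  Let `f` be a nonnegative function, bounded by
`C₁` and twice continuously differentiable on the closed ball of radius `R`
centered at the origin of `ℝᵐ`, satisfying `Σ_i ∂²f/∂x_i² ≥ d² f` there
(i.e. `Δ f ≤ −d² f` for the geometer's Laplacian).  Then with
`C₂ = min (d/(4m)) (1/(4R))` one has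
`f(x) ≤ C₁ exp(−C₂ d (R² − |x|²))` on the closed ball. -/
theorem ahlfors_decay_lemma
    (m : ℕ) (hm : 1 ≤ m) (R d C₁ : ℝ) (hR : 0 < R) (hd : 0 < d) (hC₁ : 0 ≤ C₁)
    (f : EuclideanSpace ℝ (Fin m) → ℝ)
    (hf : ContDiffOn ℝ 2 f (closedBall 0 R))
    (hbound : ∀ x ∈ closedBall (0 : EuclideanSpace ℝ (Fin m)) R, 0 ≤ f x ∧ f x ≤ C₁)
    (hsub : ∀ x ∈ closedBall (0 : EuclideanSpace ℝ (Fin m)) R,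
      d ^ 2 * f x ≤ ∑ i : Fin m,
        iteratedFDerivWithin ℝ 2 f (closedBall 0 R) x
          ![EuclideanSpace.single i (1 : ℝ), EuclideanSpace.single i (1 : ℝ)]) :
    ∀ x ∈ closedBall (0 : EuclideanSpace ℝ (Fin m)) R,
      f x ≤ C₁ * Real.exp (-(min (d / (4 * m)) (1 / (4 * R)) * d * (R ^ 2 - ‖x‖ ^ 2))) := by
  set a : ℝ := min (d / (4 * m)) (1 / (4 * R)) * d with ha
  have hm' : (0 : ℝ) < m := by exact_mod_cast hm
  have ha0 : 0 ≤ a := by positivity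
  have ham : a * m ≤ d ^ 2 / 4 := by
    have h : min (d / (4 * m)) (1 / (4 * R)) ≤ d / (4 * m) := min_le_left _ _
    rw [le_div_iff₀ (by positivity)] at h
    nlinarith
  have haR : a * R ≤ d / 4 := by
    have h : min (d / (4 * m)) (1 / (4 * R)) ≤ 1 / (4 * R) := min_le_right _ _
    rw [le_div_iff₀ (by positivity)] at h
    nlinarith
  clear_value a
  set g : EuclideanSpace ℝ (Fin m) → ℝ :=
    fun x => C₁ * Real.exp (-(a * (R ^ 2 - ‖x‖ ^ 2))) with hg
  have hgc : Continuous g := by fun_prop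
  obtain ⟨x₀, hx₀, hmax⟩ := (isCompact_closedBall (0 : EuclideanSpace ℝ (Fin m)) R).exists_isMaxOn
    ⟨0, by simp [hR.le]⟩ (hf.continuousOn.sub hgc.continuousOn)
  suffices hle : f x₀ - g x₀ ≤ 0 by
    intro x hx
    have h : f x - g x ≤ f x₀ - g x₀ := hmax hx
    change f x ≤ g x
    linarith
  by_contra! hpos
  have hxR : ‖x₀‖ ≤ R := by simpa using hx₀
  have hlt : ‖x₀‖ < R := by
    refine lt_of_le_of_ne hxR fun h => ?_
    have : g x₀ = C₁ := by simp [hg, h]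
    linarith [(hbound x₀ hx₀).2]
  have hnhds : closedBall (0 : EuclideanSpace ℝ (Fin m)) R ∈ nhds x₀ :=
    Filter.mem_of_superset (isOpen_ball.mem_nhds (by simpa using hlt)) ball_subset_closedBall
  have hfx : ContDiffAt ℝ 2 f x₀ := hf.contDiffAt hnhds
  have hlm : IsLocalMax (fun x => f x - g x) x₀ := hmax.isLocalMax hnhds
  have hg0 : 0 ≤ g x₀ := by positivity
  have key : ∀ i : Fin m, iteratedFDerivWithin ℝ 2 f (closedBall 0 R) x₀
      ![EuclideanSpace.single i (1 : ℝ), EuclideanSpace.single i (1 : ℝ)]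
      ≤ g x₀ * (4 * a ^ 2 * x₀ i ^ 2 + 2 * a) := by
    intro i
    set v : EuclideanSpace ℝ (Fin m) := EuclideanSpace.single i (1 : ℝ) with hv
    have hgline : ∀ t : ℝ, g (x₀ + t • v) =
        C₁ * Real.exp (-(a * (R ^ 2 - (‖x₀‖ ^ 2 + 2 * t * x₀ i + t ^ 2)))) := by
      intro t
      have : ‖x₀ + t • v‖ ^ 2 = ‖x₀‖ ^ 2 + 2 * t * x₀ i + t ^ 2 := by
        rw [norm_add_sq_real, norm_smul, inner_smul_right, hv,
          EuclideanSpace.inner_single_right]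
        simp
        ring
      simp only [hg, this]
    obtain ⟨h1, h2⟩ := hasDerivAt_line_two v hfx
    have hwithin : iteratedFDerivWithin ℝ 2 f (closedBall 0 R) x₀ = iteratedFDeriv ℝ 2 f x₀ := by
      rw [← iteratedFDerivWithin_univ]
      exact iteratedFDerivWithin_congr_set (by simpa using hnhds) 2
    rw [hwithin]
    have hlmax : IsLocalMax (fun t : ℝ => f (x₀ + t • v) -
        C₁ * Real.exp (-(a * (R ^ 2 - (‖x₀‖ ^ 2 + 2 * t * x₀ i + t ^ 2))))) 0 := by
      have hc : ContinuousAt (fun t : ℝ => x₀ + t • v) 0 := by fun_prop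
      have hlm' : IsLocalMax (fun x => f x - g x) (x₀ + (0 : ℝ) • v) := by simpa using hlm
      have := hlm'.comp_continuous (g := fun t : ℝ => x₀ + t • v) (b := 0) hc
      simpa only [Function.comp_def, hgline] using this
    have := deriv_two_nonpos_of_isLocalMax
      (h1.mono fun s hs => hs.sub (hasDerivAt_comparison C₁ a R (x₀ i) (‖x₀‖ ^ 2) s))
      (h2.sub (hasDerivAt_comparison_two C₁ a R (x₀ i) (‖x₀‖ ^ 2))) hlmax
    exact sub_nonpos.mp this
  have hsum : d ^ 2 * f x₀ ≤ g x₀ * (4 * a ^ 2 * ‖x₀‖ ^ 2 + 2 * a * m) := by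
    refine (hsub x₀ hx₀).trans ((Finset.sum_le_sum fun i _ => key i).trans_eq ?_)
    rw [← Finset.mul_sum, Finset.sum_add_distrib, ← Finset.mul_sum,
      EuclideanSpace.real_norm_sq_eq, Finset.sum_const, Finset.card_univ, Fintype.card_fin,
      nsmul_eq_mul]
    ring
  have hax : (a * ‖x₀‖) ^ 2 ≤ (d / 4) ^ 2 :=
    pow_le_pow_left₀ (by positivity) ((mul_le_mul_of_nonneg_left hxR ha0).trans haR) 2
  have hcoef : 4 * a ^ 2 * ‖x₀‖ ^ 2 + 2 * a * m ≤ d ^ 2 := by nlinarith [sq_nonneg d]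
  nlinarith [mul_le_mul_of_nonneg_left hcoef hg0, mul_pos (pow_pos hd 2) hpos]
end
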